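/- arXiv:0905.0034 — 2 statements merged into one kernel-verified Lean document; each statement's English description precedes it below -/
import Mathlib

section
/- Let F be a field of characteristic zero, θ(X) = dXd⁻¹ with d = diag(−1,1), and 𝔥^⊥ the space of antidiagonal matrices in 𝔰𝔩₂(F). A linear subspace 𝔞 ⊆ 𝔥^⊥ is a Cartan subspace of 𝔥^⊥ — that is, a maximal abelian subspace of 𝔥^⊥ all of whose elements are semisimple — if and only if 𝔞 = 𝔞_c for some c ∈ F^×, where 𝔞_c is the line spanned by the matrix X_c with first row (0, c) and second row (1, 0). In particular, every such Cartan subspace is one-dimensional. -/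
open Matrix

/-- The subspace `𝔥^⊥` of antidiagonal matrices (the `(−1)`-eigenspace of the involution
`θ(X) = dXd⁻¹`, `d = diag(−1,1)`, inside `𝔰𝔩₂(F)`). -/
def antidiagSubspace (F : Type*) [Field F] : Submodule F (Matrix (Fin 2) (Fin 2) F) where
  carrier := {X | ∀ i, X i i = 0}
  add_mem' := by
    intro a b ha hb i
    simp [Matrix.add_apply, ha i, hb i]
  zero_mem' := by intro i; simp
  smul_mem' := by
    intro c X hX i
    simp [Matrix.smul_apply, hX i]

/-- A matrix is semisimple if it is diagonalizable over an algebraic closure of `F`. -/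
def IsSemisimpleMat (F : Type*) [Field F] (X : Matrix (Fin 2) (Fin 2) F) : Prop :=
  ∃ P : (Matrix (Fin 2) (Fin 2) (AlgebraicClosure F))ˣ,
    (((P⁻¹ : (Matrix (Fin 2) (Fin 2) (AlgebraicClosure F))ˣ) :
        Matrix (Fin 2) (Fin 2) (AlgebraicClosure F)) *
      X.map (algebraMap F (AlgebraicClosure F)) *
      (P : Matrix (Fin 2) (Fin 2) (AlgebraicClosure F))).IsDiag

/-- The matrix `X_c` with rows `(0, c)` and `(1, 0)`. -/
def Xc (F : Type*) [Field F] (c : F) : Matrix (Fin 2) (Fin 2) F := !![0, c; 1, 0]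

/-- `𝔞` is a Cartan subspace of `𝔥^⊥`: it is contained in `𝔥^⊥`, abelian (the Lie bracket
vanishes identically on it), consists of semisimple elements, and is maximal among abelian
subspaces of `𝔥^⊥`. -/
def IsCartanSubspace (F : Type*) [Field F] (𝔞 : Submodule F (Matrix (Fin 2) (Fin 2) F)) : Prop :=
  𝔞 ≤ antidiagSubspace F ∧
  (∀ X ∈ 𝔞, ∀ Y ∈ 𝔞, ⁅X, Y⁆ = (0 : Matrix (Fin 2) (Fin 2) F)) ∧
  (∀ X ∈ 𝔞, IsSemisimpleMat F X) ∧
  (∀ 𝔟 : Submodule F (Matrix (Fin 2) (Fin 2) F), 𝔟 ≤ antidiagSubspace F →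
    (∀ X ∈ 𝔟, ∀ Y ∈ 𝔟, ⁅X, Y⁆ = (0 : Matrix (Fin 2) (Fin 2) F)) → 𝔞 ≤ 𝔟 → 𝔞 = 𝔟)

/-!
An antidiagonal `X` satisfies `X² = (X₀₁ X₁₀) • 1`. So if `X ≠ 0` is semisimple, then
`X₀₁ X₁₀ ≠ 0`, and `X` is a multiple of `X_c` with `c = X₀₁ / X₁₀ ≠ 0`. The centralizer of `X_c`
in `𝔥^⊥` is the line `F · X_c`, so an abelian subspace of `𝔥^⊥` containing `X_c` is this line.
Conversely, over an algebraic closure `X_c` has the eigenvalues `±√c`, which are distinct when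
`c ≠ 0` and the characteristic is not `2`.
-/

theorem lie_eq_zero_of_mem_span_singleton {R A : Type*} [CommSemiring R] [Ring A] [Algebra R A]
    {x y z : A} (hy : y ∈ Submodule.span R {x}) (hz : z ∈ Submodule.span R {x}) : ⁅y, z⁆ = 0 := by
  obtain ⟨a, rfl⟩ := Submodule.mem_span_singleton.mp hy
  obtain ⟨b, rfl⟩ := Submodule.mem_span_singleton.mp hz
  exact (((Commute.refl x).smul_left a).smul_right b).lie_eq

theorem eq_zero_of_isDiag_of_isNilpotent {R n : Type*} [Semiring R] [IsReduced R] [Fintype n]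
    [DecidableEq n] {D : Matrix n n R} (hD : D.IsDiag) (hnil : IsNilpotent D) : D = 0 := by
  obtain ⟨k, hk⟩ := hnil
  rw [← hD.diagonal_diag, diagonal_pow, diagonal_eq_zero] at hk
  rw [← hD.diagonal_diag, diagonal_eq_zero]
  exact eq_zero_of_pow_eq_zero hk

section

variable {F : Type*} [Field F] {X Y : Matrix (Fin 2) (Fin 2) F}
  {𝔞 : Submodule F (Matrix (Fin 2) (Fin 2) F)}

theorem IsSemisimpleMat.eq_zero_of_isNilpotent (hX : IsSemisimpleMat F X)
    (hnil : IsNilpotent X) : X = 0 := by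
  obtain ⟨P, hP⟩ := hX
  set Z := X.map (algebraMap F (AlgebraicClosure F))
  have hZ : IsNilpotent Z := hnil.map (algebraMap F (AlgebraicClosure F)).mapMatrix
  have hconj : IsNilpotent (P⁻¹.val * Z * P.val) := by
    obtain ⟨k, hk⟩ := hZ
    exact ⟨k, by rw [Units.conj_pow', hk, mul_zero, zero_mul]⟩
  have hZ0 : Z = 0 := by
    rw [← P⁻¹.mul_right_eq_zero, ← P.mul_left_eq_zero]
    exact eq_zero_of_isDiag_of_isNilpotent hP hconj
  exact map_injective (algebraMap F (AlgebraicClosure F)).injective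
    (hZ0.trans (Matrix.map_zero _ (map_zero _)).symm)

theorem IsSemisimpleMat.smul (hX : IsSemisimpleMat F X) (t : F) : IsSemisimpleMat F (t • X) := by
  obtain ⟨P, hP⟩ := hX
  refine ⟨P, ?_⟩
  rw [map_smul' _ _ _ (map_mul _), mul_smul_comm, smul_mul_assoc]
  exact hP.smul _

theorem mul_self_of_mem_antidiagSubspace (hX : X ∈ antidiagSubspace F) :
    X * X = (X 0 1 * X 1 0) • (1 : Matrix (Fin 2) (Fin 2) F) := by
  have h₀ : X 0 0 = 0 := hX 0
  have h₁ : X 1 1 = 0 := hX 1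
  ext i j
  fin_cases i <;> fin_cases j <;> simp [mul_apply, h₀, h₁, mul_comm]

theorem IsSemisimpleMat.apply_mul_apply_ne_zero (hss : IsSemisimpleMat F X)
    (hX : X ∈ antidiagSubspace F) (hX₀ : X ≠ 0) : X 0 1 * X 1 0 ≠ 0 := by
  intro h
  have hsq : X ^ 2 = 0 := by rw [sq, mul_self_of_mem_antidiagSubspace hX, h, zero_smul]
  exact hX₀ (hss.eq_zero_of_isNilpotent ⟨2, hsq⟩)

theorem Xc_ne_zero (c : F) : Xc F c ≠ 0 := fun h => by
  simpa [Xc] using congrFun₂ h 1 0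

theorem Xc_mem_antidiagSubspace (c : F) : Xc F c ∈ antidiagSubspace F := by
  intro i
  fin_cases i <;> rfl

theorem span_Xc_le_antidiagSubspace (c : F) :
    Submodule.span F {Xc F c} ≤ antidiagSubspace F :=
  (Submodule.span_singleton_le_iff_mem _ _).mpr (Xc_mem_antidiagSubspace c)

theorem eq_smul_Xc_of_mem_antidiagSubspace {c : F} (hX : X ∈ antidiagSubspace F)
    (h : X 0 1 = X 1 0 * c) : X = X 1 0 • Xc F c := by
  have h₀ : X 0 0 = 0 := hX 0
  have h₁ : X 1 1 = 0 := hX 1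
  ext i j
  fin_cases i <;> fin_cases j <;> simp [Xc, h₀, h₁, h]

theorem mem_span_Xc_of_lie_eq_zero {c : F} (hY : Y ∈ antidiagSubspace F)
    (h : ⁅Xc F c, Y⁆ = 0) : Y ∈ Submodule.span F {Xc F c} := by
  have hentry : c * Y 1 0 - Y 0 1 = 0 := by
    simpa [Ring.lie_def, Xc, mul_apply, -cons_mul] using congrFun₂ h 0 0
  refine Submodule.mem_span_singleton.mpr ⟨Y 1 0, ?_⟩
  exact (eq_smul_Xc_of_mem_antidiagSubspace hY (by linear_combination -hentry)).symm

theorem eq_span_Xc_of_mem {c : F} (h𝔞 : 𝔞 ≤ antidiagSubspace F)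
    (hab : ∀ X ∈ 𝔞, ∀ Y ∈ 𝔞, ⁅X, Y⁆ = 0) (hc : Xc F c ∈ 𝔞) :
    𝔞 = Submodule.span F {Xc F c} :=
  le_antisymm (fun Y hY => mem_span_Xc_of_lie_eq_zero (h𝔞 hY) (hab _ hc Y hY))
    ((Submodule.span_singleton_le_iff_mem _ _).mpr hc)

theorem Xc_sq_mul_eigenvectors (s : F) :
    Xc F (s ^ 2) * !![s, -s; 1, 1] = !![s, -s; 1, 1] * diagonal ![s, -s] := by
  ext i j
  fin_cases i <;> fin_cases j <;> simp [Xc, mul_apply, sq]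

theorem isSemisimpleMat_Xc [NeZero (2 : F)] {c : F} (hc : c ≠ 0) : IsSemisimpleMat F (Xc F c) := by
  let φ := algebraMap F (AlgebraicClosure F)
  obtain ⟨s, hs⟩ : ∃ s, s ^ 2 = φ c := IsAlgClosed.exists_pow_nat_eq (φ c) two_pos
  have hs₀ : s ≠ 0 := by
    rintro rfl
    exact hc (by simpa [φ] using hs.symm)
  have h₂ : (2 : AlgebraicClosure F) ≠ 0 := by
    simpa only [map_ofNat] using (map_ne_zero φ).mpr two_ne_zero
  have hdet : (!![s, -s; 1, 1]).det = 2 * s := by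
    rw [det_fin_two_of]
    ring
  obtain ⟨P, hP⟩ : IsUnit !![s, -s; 1, 1] := by
    rw [isUnit_iff_isUnit_det, isUnit_iff_ne_zero, hdet]
    exact mul_ne_zero h₂ hs₀
  have hmap : (Xc F c).map φ = Xc (AlgebraicClosure F) (s ^ 2) := by
    ext i j
    fin_cases i <;> fin_cases j <;> simp [Xc, hs]
  refine ⟨P, ?_⟩
  rw [hmap, mul_assoc, hP, Xc_sq_mul_eigenvectors, ← hP, Units.inv_mul_cancel_left]
  exact isDiag_diagonal _

theorem isCartanSubspace_span_Xc [NeZero (2 : F)] {c : F} (hc : c ≠ 0) :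
    IsCartanSubspace F (Submodule.span F {Xc F c}) := by
  refine ⟨span_Xc_le_antidiagSubspace c, fun _ hX _ hY => lie_eq_zero_of_mem_span_singleton hX hY,
    fun X hX => ?_, fun 𝔟 h𝔟 hab hle => ?_⟩
  · obtain ⟨t, rfl⟩ := Submodule.mem_span_singleton.mp hX
    exact (isSemisimpleMat_Xc hc).smul t
  · exact (eq_span_Xc_of_mem h𝔟 hab (hle (Submodule.mem_span_singleton_self _))).symm

theorem IsCartanSubspace.ne_bot (h : IsCartanSubspace F 𝔞) : 𝔞 ≠ ⊥ := by
  obtain ⟨-, -, -, hmax⟩ := h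
  rintro rfl
  have hspan : ⊥ = Submodule.span F {Xc F 1} := hmax _ (span_Xc_le_antidiagSubspace 1)
    (fun _ hX _ hY => lie_eq_zero_of_mem_span_singleton hX hY) bot_le
  exact Xc_ne_zero 1 (Submodule.span_singleton_eq_bot.mp hspan.symm)

theorem IsCartanSubspace.exists_eq_span_Xc (h : IsCartanSubspace F 𝔞) :
    ∃ c : F, c ≠ 0 ∧ 𝔞 = Submodule.span F {Xc F c} := by
  obtain ⟨X, hX, hX₀⟩ := Submodule.exists_mem_ne_zero_of_ne_bot h.ne_bot
  obtain ⟨h𝔞, hab, hss, -⟩ := h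
  obtain ⟨h₀₁, h₁₀⟩ := mul_ne_zero_iff.mp ((hss X hX).apply_mul_apply_ne_zero (h𝔞 hX) hX₀)
  have hXc : X = X 1 0 • Xc F (X 0 1 / X 1 0) :=
    eq_smul_Xc_of_mem_antidiagSubspace (h𝔞 hX) (mul_div_cancel₀ _ h₁₀).symm
  refine ⟨X 0 1 / X 1 0, div_ne_zero h₀₁ h₁₀, eq_span_Xc_of_mem h𝔞 hab ?_⟩
  exact (𝔞.smul_mem_iff h₁₀).mp (hXc ▸ hX)

theorem IsCartanSubspace.finrank_eq_one (h : IsCartanSubspace F 𝔞) : Module.finrank F 𝔞 = 1 := by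
  obtain ⟨c, -, rfl⟩ := h.exists_eq_span_Xc
  exact finrank_span_singleton (Xc_ne_zero c)

end

theorem cartan_subspaces_of_antidiag_general (F : Type*) [Field F] [NeZero (2 : F)]
    (𝔞 : Submodule F (Matrix (Fin 2) (Fin 2) F)) :
    (IsCartanSubspace F 𝔞 ↔ ∃ c : F, c ≠ 0 ∧ 𝔞 = Submodule.span F {Xc F c}) ∧
    (IsCartanSubspace F 𝔞 → Module.finrank F 𝔞 = 1) := by
  refine ⟨⟨IsCartanSubspace.exists_eq_span_Xc, ?_⟩, IsCartanSubspace.finrank_eq_one⟩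
  rintro ⟨c, hc, rfl⟩
  exact isCartanSubspace_span_Xc hc

/-- A subspace `𝔞 ⊆ 𝔥^⊥` is a Cartan subspace iff `𝔞 = 𝔞_c = F·X_c` for
some `c ∈ F^×`; in particular every Cartan subspace of `𝔥^⊥` is one-dimensional. -/
theorem cartan_subspaces_of_antidiag (F : Type*) [Field F] [CharZero F]
    (𝔞 : Submodule F (Matrix (Fin 2) (Fin 2) F)) :
    (IsCartanSubspace F 𝔞 ↔ ∃ c : F, c ≠ 0 ∧ 𝔞 = Submodule.span F {Xc F c}) ∧
    (IsCartanSubspace F 𝔞 → Module.finrank F 𝔞 = 1) :=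
  cartan_subspaces_of_antidiag_general F 𝔞
end

section
/- Let F be a field of characteristic zero and, for c ∈ F^×, let 𝔞_c ⊆ 𝔰𝔩₂(F) be the line spanned by the matrix X_c with first row (0, c) and second row (1, 0). For c, d ∈ F^×, there exists an element h = diag(s, s⁻¹) of the diagonal torus H_F ⊆ SL₂(F) with h⁻¹ 𝔞_c h = 𝔞_d if and only if there exists r ∈ F^× with c = d r⁴. In other words, the Cartan subspaces 𝔞_c and 𝔞_d are conjugate by an element of H_F precisely when c and d represent the same fourth power class in F^×. -/
open Matrix

/-- The Cartan subspace `𝔞_c = {(0, ct; t, 0) : t ∈ F}` of antidiagonal matrices. -/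
def cartanLine (F : Type*) [Field F] (c : F) : Set (Matrix (Fin 2) (Fin 2) F) :=
  {X | ∃ t : F, X = !![0, c * t; t, 0]}

/-! Conjugation by `diag(a, b)` multiplies the upper right entry of an antidiagonal matrix by
`b / a` and the lower left one by `a / b`, hence their ratio by `(b / a) ^ 2`, which for
`diag(s, s⁻¹)` is `(s ^ 4)⁻¹`. This ratio is constant on `𝔞_c ∖ {0}`, equal to `c`, so it
determines the line. -/

section DiagonalConjugation

variable {F : Type*} [Field F]

theorem inv_diagonal_of_forall_ne_zero {n : Type*} [Fintype n] [DecidableEq n] {v : n → F}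
    (hv : ∀ i, v i ≠ 0) : (diagonal v)⁻¹ = diagonal v⁻¹ := by
  refine inv_eq_left_inv ?_
  simp [diagonal_mul_diagonal, hv]

theorem inv_diagonal_mul_antidiagonal_mul_diagonal {a b : F} (ha : a ≠ 0) (hb : b ≠ 0) (x y : F) :
    (diagonal ![a, b])⁻¹ * !![0, x; y, 0] * diagonal ![a, b]
      = !![0, x * (b / a); y * (a / b), 0] := by
  rw [inv_diagonal_of_forall_ne_zero (by simp [Fin.forall_fin_two, ha, hb])]
  ext i j
  fin_cases i <;> fin_cases j <;> simp [diagonal_mul, mul_diagonal] <;> ring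

theorem cartanLine_eq_range (c : F) :
    cartanLine F c = Set.range fun t : F => !![0, c * t; t, 0] := by
  ext X
  exact exists_congr fun _ => eq_comm

theorem antidiagonal_mem_cartanLine_iff {c x y : F} :
    !![0, x; y, 0] ∈ cartanLine F c ↔ x = c * y := by
  simp [cartanLine]

theorem cartanLine_injective : Function.Injective (cartanLine F) := by
  intro c d h
  have hmem : !![0, c; 1, 0] ∈ cartanLine F d :=
    h ▸ antidiagonal_mem_cartanLine_iff.mpr (mul_one c).symm
  simpa using antidiagonal_mem_cartanLine_iff.mp hmem

theorem image_conj_diagonal_cartanLine {a b : F} (ha : a ≠ 0) (hb : b ≠ 0) (c : F) :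
    (fun X => (diagonal ![a, b])⁻¹ * X * diagonal ![a, b]) '' cartanLine F c
      = cartanLine F (c * (b / a) ^ 2) := by
  have hconj (t : F) :
      (diagonal ![a, b])⁻¹ * !![0, c * t; t, 0] * diagonal ![a, b]
        = !![0, c * (b / a) ^ 2 * (t * (a / b)); t * (a / b), 0] := by
    rw [inv_diagonal_mul_antidiagonal_mul_diagonal ha hb]
    congr 3
    field_simp
  have hsurj : Function.Surjective fun t : F => t * (a / b) :=
    mul_right_surjective₀ (div_ne_zero ha hb)
  rw [cartanLine_eq_range, cartanLine_eq_range, ← Set.range_comp,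
    ← hsurj.range_comp fun t => !![0, c * (b / a) ^ 2 * t; t, 0]]
  exact congrArg Set.range (funext hconj)

theorem image_conj_torus_cartanLine {s : F} (hs : s ≠ 0) (c : F) :
    (fun X => (diagonal ![s, s⁻¹])⁻¹ * X * diagonal ![s, s⁻¹]) '' cartanLine F c
      = cartanLine F (c / s ^ 4) := by
  rw [image_conj_diagonal_cartanLine hs (inv_ne_zero hs)]
  congr 1
  field_simp

theorem cartanLine_conjugate_iff_fourth_power_class_general (c d : F) :
    (∃ s : F, s ≠ 0 ∧
        (fun X => (diagonal ![s, s⁻¹])⁻¹ * X * diagonal ![s, s⁻¹]) '' cartanLine F c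
          = cartanLine F d)
    ↔ ∃ r : F, r ≠ 0 ∧ c = d * r ^ 4 := by
  refine exists_congr fun s => and_congr_right fun hs => ?_
  rw [image_conj_torus_cartanLine hs, cartanLine_injective.eq_iff, div_eq_iff (pow_ne_zero 4 hs)]

end DiagonalConjugation

/-- For `c, d ∈ F^×`, the Cartan subspaces `𝔞_c` and `𝔞_d` are conjugate
by an element `diag(s, s⁻¹)` of the diagonal torus `H_F ⊆ SL₂(F)` if and only if
`c = d r⁴` for some `r ∈ F^×`, i.e. iff `c` and `d` represent the same fourth power class. -/
theorem cartanLine_conjugate_iff_fourth_power_class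
    (F : Type*) [Field F] [CharZero F] (c d : F) (hc : c ≠ 0) (hd : d ≠ 0) :
    (∃ s : F, s ≠ 0 ∧
        (fun X => (diagonal ![s, s⁻¹])⁻¹ * X * diagonal ![s, s⁻¹]) '' cartanLine F c
          = cartanLine F d)
    ↔ ∃ r : F, r ≠ 0 ∧ c = d * r ^ 4 :=
  cartanLine_conjugate_iff_fourth_power_class_general c d
end
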